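/- arXiv:2412.18803 — 8 statements merged into one kernel-verified Lean document; each statement's English description precedes it below -/
import Mathlib

section
/- For every bounded measurable weight function h : 𝒳 → ℝ, the AIPW pseudo-outcome identifies the weighted average treatment effect: E[h(X)·Γ] = E[h(X)·τ(X)]. -/
open MeasureTheory ProbabilityTheory

theorem aipw_aux {Ω 𝒳 : Type*} [MeasurableSpace Ω] [m𝒳 : MeasurableSpace 𝒳]
    (P : Measure Ω) [IsProbabilityMeasure P] (X : Ω → 𝒳) (hX : Measurable X)
    (Z : Ω → ℝ) (hZ : Integrable Z P) (c : 𝒳 → ℝ)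
    (hc : P[Z | m𝒳.comap X] =ᵐ[P] fun ω => c (X ω))
    (g : 𝒳 → ℝ) (hg : Measurable g) (C : ℝ) (hgb : ∀ x, |g x| ≤ C) :
    Integrable (fun ω => g (X ω) * Z ω) P ∧ Integrable (fun ω => g (X ω) * c (X ω)) P ∧
      ∫ ω, g (X ω) * Z ω ∂P = ∫ ω, g (X ω) * c (X ω) ∂P := by
  have hle : m𝒳.comap X ≤ _ := hX.comap_le
  have hgm : StronglyMeasurable[m𝒳.comap X] (fun ω => g (X ω)) :=
    (hg.comp (comap_measurable X)).stronglyMeasurable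
  have hb : ∀ᵐ ω ∂P, ‖g (X ω)‖ ≤ C := ae_of_all _ fun ω => hgb _
  have h1 := condExp_stronglyMeasurable_mul_of_bound hle hgm hZ C hb
  have h2 : P[(fun ω => g (X ω)) * Z | m𝒳.comap X] =ᵐ[P] fun ω => g (X ω) * c (X ω) := by
    filter_upwards [h1, hc] with ω a b
    rw [a, Pi.mul_apply, b]
  refine ⟨hZ.bdd_mul (hg.comp hX).aestronglyMeasurable hb, integrable_condExp.congr h2, ?_⟩
  rw [← integral_congr_ae h2, integral_condExp hle]
  rfl

/-- For every bounded measurable weight function `h`, the AIPW pseudo-outcome identifies the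
weighted average treatment effect: `E[h(X)·Γ] = E[h(X)·τ(X)]`. -/
theorem aipw_weighted_ate
    {Ω 𝒳 : Type*} [MeasurableSpace Ω] [m𝒳 : MeasurableSpace 𝒳]
    (P : Measure Ω) [IsProbabilityMeasure P]
    (X : Ω → 𝒳) (W Y : Ω → ℝ)
    (hX : Measurable X) (hW : Measurable W) (hY : Measurable Y)
    (hW01 : ∀ᵐ ω ∂P, W ω = 0 ∨ W ω = 1)
    (M : ℝ) (hM : 0 < M) (hYb : ∀ᵐ ω ∂P, |Y ω| ≤ M)
    (e μ₀ μ₁ : 𝒳 → ℝ)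
    (he : Measurable e) (hμ₀ : Measurable μ₀) (hμ₁ : Measurable μ₁)
    (C₀ C₁ : ℝ) (hμ₀b : ∀ x, |μ₀ x| ≤ C₀) (hμ₁b : ∀ x, |μ₁ x| ≤ C₁)
    (η : ℝ) (hη₀ : 0 < η) (hη₁ : η < 1/2)
    (heb : ∀ x, η ≤ e x ∧ e x ≤ 1 - η)
    (hce : P[W | m𝒳.comap X] =ᵐ[P] fun ω => e (X ω))
    (hc1 : P[fun ω => W ω * Y ω | m𝒳.comap X] =ᵐ[P] fun ω => e (X ω) * μ₁ (X ω))
    (hc0 : P[fun ω => (1 - W ω) * Y ω | m𝒳.comap X]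
        =ᵐ[P] fun ω => (1 - e (X ω)) * μ₀ (X ω)) :
    ∀ (h : 𝒳 → ℝ) (Ch : ℝ), Measurable h → (∀ x, |h x| ≤ Ch) →
      ∫ ω, h (X ω) * (W ω * (Y ω - μ₁ (X ω)) / e (X ω) + μ₁ (X ω)
          - (1 - W ω) * (Y ω - μ₀ (X ω)) / (1 - e (X ω)) - μ₀ (X ω)) ∂P
        = ∫ ω, h (X ω) * (μ₁ (X ω) - μ₀ (X ω)) ∂P := by
  intro h Ch hh hhb
  have hWb : ∀ᵐ ω ∂P, ‖W ω‖ ≤ 1 := by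
    filter_upwards [hW01] with ω hω
    rcases hω with hω | hω <;> simp [hω]
  have hW'b : ∀ᵐ ω ∂P, ‖1 - W ω‖ ≤ 1 := by
    filter_upwards [hW01] with ω hω
    rcases hω with hω | hω <;> simp [hω]
  have iW : Integrable W P := Integrable.of_bound hW.aestronglyMeasurable 1 hWb
  have iY : Integrable Y P := Integrable.of_bound hY.aestronglyMeasurable M hYb
  have iWY : Integrable (fun ω => W ω * Y ω) P := iY.bdd_mul hW.aestronglyMeasurable hWb
  have iWY' : Integrable (fun ω => (1 - W ω) * Y ω) P :=
    iY.bdd_mul (measurable_const.sub hW).aestronglyMeasurable hW'b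
  have b1 : ∀ x, |h x / e x| ≤ Ch / η := fun x => by
    have := heb x
    have hp : 0 < e x := by linarith
    rw [abs_div, abs_of_pos hp]
    exact div_le_div₀ ((abs_nonneg _).trans (hhb x)) (hhb x) hη₀ this.1
  have b0 : ∀ x, |h x / (1 - e x)| ≤ Ch / η := fun x => by
    have := heb x
    have hp : 0 < 1 - e x := by linarith
    rw [abs_div, abs_of_pos hp]
    exact div_le_div₀ ((abs_nonneg _).trans (hhb x)) (hhb x) hη₀ (by linarith)
  have mulb : ∀ {a b A B : ℝ}, |a| ≤ A → |b| ≤ B → |a * b| ≤ A * B := fun {a b A B} ha hb => by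
    rw [abs_mul]
    exact mul_le_mul ha hb (abs_nonneg _) ((abs_nonneg _).trans ha)
  have m1 : Measurable fun x => h x / e x := hh.div he
  have m0 : Measurable fun x => h x / (1 - e x) := hh.div (measurable_const.sub he)
  obtain ⟨i1, j1, k1⟩ := aipw_aux P X hX _ iWY (fun x => e x * μ₁ x) hc1 _ m1 _ b1
  obtain ⟨i2, j2, k2⟩ := aipw_aux P X hX _ iWY' (fun x => (1 - e x) * μ₀ x) hc0 _ m0 _ b0
  obtain ⟨i3, j3, k3⟩ := aipw_aux P X hX _ iW e hce
    (fun x => h x / e x * μ₁ x + h x / (1 - e x) * μ₀ x) ((m1.mul hμ₁).add (m0.mul hμ₀)) _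
    (fun x => (abs_add_le _ _).trans (add_le_add (mulb (b1 x) (hμ₁b x)) (mulb (b0 x) (hμ₀b x))))
  have i4 : Integrable (fun ω => h (X ω) * (μ₁ (X ω) - μ₀ (X ω))
      + h (X ω) / (1 - e (X ω)) * μ₀ (X ω)) P := by
    refine Integrable.of_bound (((hh.mul (hμ₁.sub hμ₀)).add (m0.mul hμ₀)).comp hX).aestronglyMeasurable
      (Ch * (C₁ + C₀) + Ch / η * C₀) (ae_of_all _ fun ω => ?_)
    exact (abs_add_le _ _).trans (add_le_add (mulb (hhb _)
      ((abs_sub _ _).trans (add_le_add (hμ₁b _) (hμ₀b _)))) (mulb (b0 _) (hμ₀b _)))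
  have key := congrArg₂ (· + ·) (congrArg₂ (· - ·) (congrArg₂ (· - ·) k1 k2) k3)
    (Eq.refl (∫ ω, (h (X ω) * (μ₁ (X ω) - μ₀ (X ω)) + h (X ω) / (1 - e (X ω)) * μ₀ (X ω)) ∂P))
  beta_reduce at key
  rw [← integral_sub' i1 i2, ← integral_sub' (i1.sub i2) i3, ← integral_add' ((i1.sub i2).sub i3) i4,
    ← integral_sub' j1 j2, ← integral_sub' (j1.sub j2) j3,
    ← integral_add' ((j1.sub j2).sub j3) i4] at key
  refine Eq.trans (integral_congr_ae (ae_of_all _ fun ω => ?_))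
    (key.trans (integral_congr_ae (ae_of_all _ fun ω => ?_)))
  · simp only [Pi.sub_apply, Pi.add_apply]
    ring
  · have := heb (X ω)
    have hp : e (X ω) ≠ 0 := (by linarith : 0 < e (X ω)).ne'
    have hq : 1 - e (X ω) ≠ 0 := (by linarith : 0 < 1 - e (X ω)).ne'
    simp only [Pi.sub_apply, Pi.add_apply]
    field_simp
    ring
end

section
/- With the true nuisance functions, the one-step integrand for the absolute error is unbiased: for any bounded measurable τ̂ : 𝒳 → ℝ, E[(τ(X) − τ̂(X))² + 2(τ(X) − τ̂(X))·R] = φ(τ̂), where R := W(Y − μ₁(X))/e(X) − (1−W)(Y − μ₀(X))/(1−e(X)). Equivalently, the efficient influence function ψ(φ(τ̂); Z) := (τ(X) − τ̂(X))² + 2(τ(X) − τ̂(X))·R − φ(τ̂) has mean zero. -/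
open MeasureTheory ProbabilityTheory


def BddMeas {𝒳 : Type*} [MeasurableSpace 𝒳] (g : 𝒳 → ℝ) : Prop :=
  Measurable g ∧ ∃ C : ℝ, ∀ x, |g x| ≤ C

lemma BddMeas.mul {𝒳 : Type*} [MeasurableSpace 𝒳] {f g : 𝒳 → ℝ}
    (hf : BddMeas f) (hg : BddMeas g) : BddMeas (fun x => f x * g x) := by
  obtain ⟨hf, C, hC⟩ := hf
  obtain ⟨hg, D, hD⟩ := hg
  refine ⟨hf.mul hg, C * D, fun x => ?_⟩
  rw [abs_mul]
  exact mul_le_mul (hC x) (hD x) (abs_nonneg _) ((abs_nonneg _).trans (hC x))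

lemma BddMeas.sub {𝒳 : Type*} [MeasurableSpace 𝒳] {f g : 𝒳 → ℝ}
    (hf : BddMeas f) (hg : BddMeas g) : BddMeas (fun x => f x - g x) := by
  obtain ⟨hf, C, hC⟩ := hf
  obtain ⟨hg, D, hD⟩ := hg
  exact ⟨hf.sub hg, C + D, fun x => (abs_sub _ _).trans (add_le_add (hC x) (hD x))⟩

lemma BddMeas.inv {𝒳 : Type*} [MeasurableSpace 𝒳] {f : 𝒳 → ℝ} {η : ℝ} (hη : 0 < η)
    (hf : Measurable f) (h : ∀ x, η ≤ f x) : BddMeas (fun x => (f x)⁻¹) := by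
  refine ⟨hf.inv, η⁻¹, fun x => ?_⟩
  rw [abs_of_pos (inv_pos.2 (hη.trans_le (h x)))]
  exact inv_anti₀ hη (h x)

lemma BddMeas.integrable_mul {Ω 𝒳 : Type*} [MeasurableSpace Ω] [m𝒳 : MeasurableSpace 𝒳]
    {P : Measure Ω} {X : Ω → 𝒳} (hX : Measurable X) {Z : Ω → ℝ} (hZ : Integrable Z P)
    {g : 𝒳 → ℝ} (hg : BddMeas g) : Integrable (fun ω => g (X ω) * Z ω) P := by
  obtain ⟨hg, C, hC⟩ := hg
  exact hZ.bdd_mul (hg.comp hX).aestronglyMeasurable (Filter.Eventually.of_forall fun ω => hC (X ω))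

lemma BddMeas.integral_mul {Ω 𝒳 : Type*} [MeasurableSpace Ω] [m𝒳 : MeasurableSpace 𝒳]
    {P : Measure Ω} [IsProbabilityMeasure P]
    {X : Ω → 𝒳} (hX : Measurable X) {Z : Ω → ℝ} (hZ : Integrable Z P)
    {g c : 𝒳 → ℝ} (hg : BddMeas g) (hc : P[Z | m𝒳.comap X] =ᵐ[P] fun ω => c (X ω)) :
    ∫ ω, g (X ω) * Z ω ∂P = ∫ ω, g (X ω) * c (X ω) ∂P := by
  have hm : m𝒳.comap X ≤ _ := hX.comap_le
  have hsm : StronglyMeasurable[m𝒳.comap X] (fun ω => g (X ω)) :=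
    (hg.1.comp (comap_measurable X)).stronglyMeasurable
  rw [← integral_condExp hm]
  refine integral_congr_ae ?_
  have h := condExp_mul_of_stronglyMeasurable_left hsm (hg.integrable_mul hX hZ) hZ
  filter_upwards [h, hc] with ω h1 h2
  rw [← h2]
  exact h1

/-- With the true nuisance functions, the one-step integrand for the absolute error is
unbiased: `E[(τ(X) − τ̂(X))² + 2(τ(X) − τ̂(X))·R] = φ(τ̂)`, where
`R := W(Y − μ₁(X))/e(X) − (1−W)(Y − μ₀(X))/(1−e(X))` and `φ(τ̂) := E[(τ̂(X) − τ(X))²]`. -/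
theorem absolute_error_one_step_unbiased
    {Ω 𝒳 : Type*} [MeasurableSpace Ω] [m𝒳 : MeasurableSpace 𝒳]
    (P : Measure Ω) [IsProbabilityMeasure P]
    (X : Ω → 𝒳) (W Y : Ω → ℝ)
    (hX : Measurable X) (hW : Measurable W) (hY : Measurable Y)
    (hW01 : ∀ᵐ ω ∂P, W ω = 0 ∨ W ω = 1)
    (M : ℝ) (hM : 0 < M) (hYb : ∀ᵐ ω ∂P, |Y ω| ≤ M)
    (e μ₀ μ₁ : 𝒳 → ℝ)
    (he : Measurable e) (hμ₀ : Measurable μ₀) (hμ₁ : Measurable μ₁)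
    (C₀ C₁ : ℝ) (hμ₀b : ∀ x, |μ₀ x| ≤ C₀) (hμ₁b : ∀ x, |μ₁ x| ≤ C₁)
    (η : ℝ) (hη₀ : 0 < η) (hη₁ : η < 1/2)
    (heb : ∀ x, η ≤ e x ∧ e x ≤ 1 - η)
    (hce : P[W | m𝒳.comap X] =ᵐ[P] fun ω => e (X ω))
    (hc1 : P[fun ω => W ω * Y ω | m𝒳.comap X] =ᵐ[P] fun ω => e (X ω) * μ₁ (X ω))
    (hc0 : P[fun ω => (1 - W ω) * Y ω | m𝒳.comap X]
        =ᵐ[P] fun ω => (1 - e (X ω)) * μ₀ (X ω)) :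
    ∀ (τhat : 𝒳 → ℝ) (B : ℝ), Measurable τhat → (∀ x, |τhat x| ≤ B) →
      ∫ ω, (((μ₁ (X ω) - μ₀ (X ω)) - τhat (X ω)) ^ 2
          + 2 * ((μ₁ (X ω) - μ₀ (X ω)) - τhat (X ω))
            * (W ω * (Y ω - μ₁ (X ω)) / e (X ω)
              - (1 - W ω) * (Y ω - μ₀ (X ω)) / (1 - e (X ω)))) ∂P
        = ∫ ω, (τhat (X ω) - (μ₁ (X ω) - μ₀ (X ω))) ^ 2 ∂P := by
  intro τhat B hτ hτb
  have b0 : BddMeas μ₀ := ⟨hμ₀, C₀, hμ₀b⟩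
  have b1 : BddMeas μ₁ := ⟨hμ₁, C₁, hμ₁b⟩
  have bt : BddMeas τhat := ⟨hτ, B, hτb⟩
  have b2 : BddMeas (fun _ : 𝒳 => (2 : ℝ)) := ⟨measurable_const, |2|, fun _ => le_rfl⟩
  have bd := (b1.sub b0).sub bt
  have bi1 := BddMeas.inv hη₀ he (fun x => (heb x).1)
  have bi0 := BddMeas.inv hη₀ (measurable_const.sub he) (f := fun x => 1 - e x)
    (fun x => by linarith [(heb x).2])
  have g1 := (b2.mul bd).mul bi1
  have g0 := (b2.mul bd).mul bi0
  have k1 := g1.mul b1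
  have k0 := g0.mul b0
  have iW : Integrable W P := by
    refine Integrable.of_bound hW.aestronglyMeasurable 1 ?_
    filter_upwards [hW01] with ω h
    rcases h with h | h <;> simp [h]
  have iWY : Integrable (fun ω => W ω * Y ω) P := by
    refine Integrable.of_bound (hW.mul hY).aestronglyMeasurable M ?_
    filter_upwards [hW01, hYb] with ω h h'
    rcases h with h | h <;> simp [h, h', hM.le]
  have iWY0 : Integrable (fun ω => (1 - W ω) * Y ω) P := by
    refine Integrable.of_bound ((measurable_const.sub hW).mul hY).aestronglyMeasurable M ?_
    filter_upwards [hW01, hYb] with ω h h'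
    rcases h with h | h <;> simp [h, h', hM.le]
  have i1 : Integrable (fun _ : Ω => (1 : ℝ)) P := integrable_const 1
  have iV : Integrable (fun ω => 1 - W ω) P := i1.sub iW
  have hcV : P[fun ω => 1 - W ω | m𝒳.comap X] =ᵐ[P] fun ω => (fun x => 1 - e x) (X ω) := by
    have h := condExp_sub i1 iW (m𝒳.comap X)
    have h1 : P[fun _ : Ω => (1 : ℝ) | m𝒳.comap X] = fun _ => 1 := condExp_const hX.comap_le 1
    rw [h1] at h
    filter_upwards [h, hce] with ω h h'
    refine h.trans ?_
    simp [h']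
  have e1 := g1.integral_mul hX iWY (c := fun x => e x * μ₁ x) hc1
  have e2 := k1.integral_mul hX iW hce
  have e3 := g0.integral_mul hX iWY0 (c := fun x => (1 - e x) * μ₀ x) hc0
  have e4 := k0.integral_mul hX iV (c := fun x => 1 - e x) hcV
  have I1 := g1.integrable_mul hX iWY
  have I2 := k1.integrable_mul hX iW
  have I3 := g0.integrable_mul hX iWY0
  have I4 := k0.integrable_mul hX iV
  have I0 : Integrable (fun ω => (τhat (X ω) - (μ₁ (X ω) - μ₀ (X ω))) ^ 2) P := by
    have := (bd.mul bd).integrable_mul hX i1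
    refine this.congr (Filter.Eventually.of_forall fun ω => ?_)
    simp only
    ring
  have e12 : ∀ ω, (2 * (μ₁ (X ω) - μ₀ (X ω) - τhat (X ω)) * (e (X ω))⁻¹) * (e (X ω) * μ₁ (X ω))
      = (2 * (μ₁ (X ω) - μ₀ (X ω) - τhat (X ω)) * (e (X ω))⁻¹ * μ₁ (X ω)) * e (X ω) :=
    fun ω => by ring
  have e34 : ∀ ω, (2 * (μ₁ (X ω) - μ₀ (X ω) - τhat (X ω)) * (1 - e (X ω))⁻¹)
        * ((1 - e (X ω)) * μ₀ (X ω))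
      = (2 * (μ₁ (X ω) - μ₀ (X ω) - τhat (X ω)) * (1 - e (X ω))⁻¹ * μ₀ (X ω)) * (1 - e (X ω)) :=
    fun ω => by ring
  simp only [e12] at e1
  simp only [e34] at e3
  have J1 := integral_sub I1 I2
  have J2 := integral_sub I3 I4
  have J3 := integral_sub (I1.sub I2) (I3.sub I4)
  have J4 := integral_add I0 ((I1.sub I2).sub (I3.sub I4))
  simp only [Pi.sub_apply] at J3 J4
  rw [J3, J1, J2, e1, e2, e3, e4, sub_self, sub_self, sub_self, add_zero] at J4
  rw [← J4]
  congr 1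
  funext ω
  simp only [div_eq_mul_inv]
  ring
end

section
/- With the true nuisance functions, the one-step integrand for the relative error is unbiased: for any bounded measurable τ̂₁, τ̂₂ : 𝒳 → ℝ, E[τ̂₁(X)² − τ̂₂(X)² − 2(τ̂₁(X) − τ̂₂(X))·Γ] = δ(τ̂₁, τ̂₂), where δ(τ̂₁, τ̂₂) := φ(τ̂₁) − φ(τ̂₂). -/
open MeasureTheory ProbabilityTheory

lemma aux_bdd_mul {α : Type*} {f g : α → ℝ} (hf : ∃ C, ∀ x, |f x| ≤ C)
    (hg : ∃ C, ∀ x, |g x| ≤ C) : ∃ C, ∀ x, |f x * g x| ≤ C := by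
  obtain ⟨A, hA⟩ := hf
  obtain ⟨B, hB⟩ := hg
  refine ⟨A * B, fun x => ?_⟩
  rw [abs_mul]
  exact mul_le_mul (hA x) (hB x) (abs_nonneg _) ((abs_nonneg _).trans (hA x))

lemma aux_bdd_add {α : Type*} {f g : α → ℝ} (hf : ∃ C, ∀ x, |f x| ≤ C)
    (hg : ∃ C, ∀ x, |g x| ≤ C) : ∃ C, ∀ x, |f x + g x| ≤ C := by
  obtain ⟨A, hA⟩ := hf
  obtain ⟨B, hB⟩ := hg
  exact ⟨A + B, fun x => (abs_add_le _ _).trans (add_le_add (hA x) (hB x))⟩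

lemma aux_bdd_sub {α : Type*} {f g : α → ℝ} (hf : ∃ C, ∀ x, |f x| ≤ C)
    (hg : ∃ C, ∀ x, |g x| ≤ C) : ∃ C, ∀ x, |f x - g x| ≤ C := by
  obtain ⟨A, hA⟩ := hf
  obtain ⟨B, hB⟩ := hg
  exact ⟨A + B, fun x => (abs_sub _ _).trans (add_le_add (hA x) (hB x))⟩

lemma aux_bdd_inv {α : Type*} {f : α → ℝ} {η : ℝ} (hη : 0 < η) (hf : ∀ x, η ≤ f x) :
    ∃ C, ∀ x, |(f x)⁻¹| ≤ C := by
  refine ⟨η⁻¹, fun x => ?_⟩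
  have := hf x
  rw [abs_of_pos (inv_pos.2 (hη.trans_le this))]
  exact inv_anti₀ hη this

lemma aux_orth {Ω 𝒳 : Type*} [MeasurableSpace Ω] [m𝒳 : MeasurableSpace 𝒳]
    (P : Measure Ω) [IsProbabilityMeasure P] (X : Ω → 𝒳) (hX : Measurable X)
    (Z : Ω → ℝ) (hZ : Integrable Z P) (g h : 𝒳 → ℝ) (hh : Measurable h)
    (hb : ∃ C, ∀ x, |h x| ≤ C)
    (hc : P[Z | m𝒳.comap X] =ᵐ[P] fun ω => g (X ω)) :
    Integrable (fun ω => h (X ω) * (Z ω - g (X ω))) P ∧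
      ∫ ω, h (X ω) * (Z ω - g (X ω)) ∂P = 0 := by
  obtain ⟨C, hC⟩ := hb
  have hm : m𝒳.comap X ≤ _ := hX.comap_le
  have hg : Integrable (fun ω => g (X ω)) P := integrable_condExp.congr hc
  have hhX : AEStronglyMeasurable (fun ω => h (X ω)) P := (hh.comp hX).aestronglyMeasurable
  have hbd : ∀ᵐ ω ∂P, ‖h (X ω)‖ ≤ C := Filter.Eventually.of_forall fun ω => hC _
  have i1 : Integrable (fun ω => h (X ω) * Z ω) P := hZ.bdd_mul hhX hbd
  have i2 : Integrable (fun ω => h (X ω) * g (X ω)) P := hg.bdd_mul hhX hbd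
  have hsm : StronglyMeasurable[m𝒳.comap X] (fun ω => h (X ω)) :=
    (hh.comp (comap_measurable X)).stronglyMeasurable
  have hp := condExp_stronglyMeasurable_mul_of_bound hm hsm hZ C hbd
  have e1 : ∫ ω, h (X ω) * Z ω ∂P = ∫ ω, h (X ω) * g (X ω) ∂P := by
    have h1 := integral_condExp (μ := P) (f := (fun ω => h (X ω)) * Z) hm
    refine Eq.trans h1.symm (integral_congr_ae ?_)
    filter_upwards [hp, hc] with ω h1 h2
    rw [h1, Pi.mul_apply, h2]
  simp only [mul_sub]
  exact ⟨i1.sub i2, by rw [integral_sub i1 i2, e1, sub_self]⟩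

/-- With the true nuisance functions, the one-step integrand for the relative error is
unbiased: `E[τ̂₁(X)² − τ̂₂(X)² − 2(τ̂₁(X) − τ̂₂(X))·Γ] = δ(τ̂₁, τ̂₂) = φ(τ̂₁) − φ(τ̂₂)`. -/
theorem relative_error_one_step_unbiased
    {Ω 𝒳 : Type*} [MeasurableSpace Ω] [m𝒳 : MeasurableSpace 𝒳]
    (P : Measure Ω) [IsProbabilityMeasure P]
    (X : Ω → 𝒳) (W Y : Ω → ℝ)
    (hX : Measurable X) (hW : Measurable W) (hY : Measurable Y)
    (hW01 : ∀ᵐ ω ∂P, W ω = 0 ∨ W ω = 1)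
    (M : ℝ) (hM : 0 < M) (hYb : ∀ᵐ ω ∂P, |Y ω| ≤ M)
    (e μ₀ μ₁ : 𝒳 → ℝ)
    (he : Measurable e) (hμ₀ : Measurable μ₀) (hμ₁ : Measurable μ₁)
    (C₀ C₁ : ℝ) (hμ₀b : ∀ x, |μ₀ x| ≤ C₀) (hμ₁b : ∀ x, |μ₁ x| ≤ C₁)
    (η : ℝ) (hη₀ : 0 < η) (hη₁ : η < 1/2)
    (heb : ∀ x, η ≤ e x ∧ e x ≤ 1 - η)
    (hce : P[W | m𝒳.comap X] =ᵐ[P] fun ω => e (X ω))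
    (hc1 : P[fun ω => W ω * Y ω | m𝒳.comap X] =ᵐ[P] fun ω => e (X ω) * μ₁ (X ω))
    (hc0 : P[fun ω => (1 - W ω) * Y ω | m𝒳.comap X]
        =ᵐ[P] fun ω => (1 - e (X ω)) * μ₀ (X ω)) :
    ∀ (τhat₁ τhat₂ : 𝒳 → ℝ) (B₁ B₂ : ℝ), Measurable τhat₁ → Measurable τhat₂ →
      (∀ x, |τhat₁ x| ≤ B₁) → (∀ x, |τhat₂ x| ≤ B₂) →
      ∫ ω, (τhat₁ (X ω) ^ 2 - τhat₂ (X ω) ^ 2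
          - 2 * (τhat₁ (X ω) - τhat₂ (X ω))
            * (W ω * (Y ω - μ₁ (X ω)) / e (X ω) + μ₁ (X ω)
              - (1 - W ω) * (Y ω - μ₀ (X ω)) / (1 - e (X ω)) - μ₀ (X ω))) ∂P
        = (∫ ω, (τhat₁ (X ω) - (μ₁ (X ω) - μ₀ (X ω))) ^ 2 ∂P)
          - ∫ ω, (τhat₂ (X ω) - (μ₁ (X ω) - μ₀ (X ω))) ^ 2 ∂P := by
  intro t₁ t₂ B₁ B₂ ht₁ ht₂ hb₁ hb₂
  have iW : Integrable W P := by
    refine Integrable.of_bound hW.aestronglyMeasurable 1 ?_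
    filter_upwards [hW01] with ω h
    rcases h with h | h <;> simp [h]
  have iY : Integrable Y P := Integrable.of_bound hY.aestronglyMeasurable M hYb
  have iWY : Integrable (fun ω => W ω * Y ω) P := by
    refine iY.bdd_mul (c := 1) hW.aestronglyMeasurable ?_
    filter_upwards [hW01] with ω h
    rcases h with h | h <;> simp [h]
  have iVY : Integrable (fun ω => (1 - W ω) * Y ω) P := by
    simp only [sub_mul, one_mul]
    exact iY.sub iWY
  have bt₁ : ∃ C, ∀ x, |t₁ x| ≤ C := ⟨_, hb₁⟩
  have bt₂ : ∃ C, ∀ x, |t₂ x| ≤ C := ⟨_, hb₂⟩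
  have bm₀ : ∃ C, ∀ x, |μ₀ x| ≤ C := ⟨_, hμ₀b⟩
  have bm₁ : ∃ C, ∀ x, |μ₁ x| ≤ C := ⟨_, hμ₁b⟩
  have be : ∃ C, ∀ x, |(e x)⁻¹| ≤ C := aux_bdd_inv hη₀ fun x => (heb x).1
  have bf : ∃ C, ∀ x, |(1 - e x)⁻¹| ≤ C :=
    aux_bdd_inv hη₀ fun x => by linarith [(heb x).2]
  have b2 : ∃ C, ∀ _ : 𝒳, |(2 : ℝ)| ≤ C := ⟨_, fun _ => le_rfl⟩
  have bd := aux_bdd_mul b2 (aux_bdd_sub bt₂ bt₁)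
  have bd' := aux_bdd_mul b2 (aux_bdd_sub bt₁ bt₂)
  obtain ⟨j1, z1⟩ := aux_orth P X hX _ iWY (fun x => e x * μ₁ x)
    (fun x => 2 * (t₂ x - t₁ x) * (e x)⁻¹) (by fun_prop) (aux_bdd_mul bd be) hc1
  obtain ⟨j0, z0⟩ := aux_orth P X hX _ iVY (fun x => (1 - e x) * μ₀ x)
    (fun x => 2 * (t₁ x - t₂ x) * (1 - e x)⁻¹) (by fun_prop) (aux_bdd_mul bd' bf) hc0
  obtain ⟨j2, z2⟩ := aux_orth P X hX _ iW e
    (fun x => 2 * (t₁ x - t₂ x) * (μ₁ x * (e x)⁻¹ + μ₀ x * (1 - e x)⁻¹)) (by fun_prop)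
    (aux_bdd_mul bd' (aux_bdd_add (aux_bdd_mul bm₁ be) (aux_bdd_mul bm₀ bf))) hce
  have key : ∀ t : 𝒳 → ℝ, Measurable t → (∃ C, ∀ x, |t x| ≤ C) →
      Integrable (fun ω => (t (X ω) - (μ₁ (X ω) - μ₀ (X ω))) ^ 2) P := by
    intro t ht bt
    have b := aux_bdd_sub bt (aux_bdd_sub bm₁ bm₀)
    obtain ⟨C, hC⟩ := aux_bdd_mul b b
    refine Integrable.of_bound (Measurable.aestronglyMeasurable (by fun_prop)) C
      (Filter.Eventually.of_forall fun ω => ?_)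
    rw [pow_two]
    exact hC (X ω)
  have k1 := key t₁ ht₁ bt₁
  have k2 := key t₂ ht₂ bt₂
  have s := integral_add' (((k1.sub k2).add j1).add j0) j2
  rw [integral_add' ((k1.sub k2).add j1) j0, integral_add' (k1.sub k2) j1,
    integral_sub' k1 k2, z1, z0, z2, add_zero, add_zero, add_zero] at s
  rw [← s]
  refine integral_congr_ae (Filter.Eventually.of_forall fun ω => ?_)
  have h1 : e (X ω) ≠ 0 := (hη₀.trans_le (heb (X ω)).1).ne'
  have h2 : 1 - e (X ω) ≠ 0 := by
    have : 0 < 1 - e (X ω) := by linarith [(heb (X ω)).2]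
    exact this.ne'
  simp only [Pi.sub_apply, Pi.add_apply]
  field_simp
  ring
end

section
/- Variance upper bound for the relative error influence function (Proposition on confidence interval width): if additionally |μ₀(x)| ≤ M, |μ₁(x)| ≤ M, and |τ̂₁(x)| ≤ M_τ, |τ̂₂(x)| ≤ M_τ for all x, then Var( τ̂₁(X)² − τ̂₂(X)² − 2(τ̂₁(X) − τ̂₂(X))·Γ ) ≤ (2M_τ + 4M/η + 4M)² · E[(τ̂₁(X) − τ̂₂(X))²]. In particular, there is a constant C > 0 depending only on (M, M_τ, η) such that the variance is at most C·E[(τ̂₁(X) − τ̂₂(X))²]. -/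
open MeasureTheory ProbabilityTheory

/-- Variance upper bound for the relative error influence function:
`Var(τ̂₁(X)² − τ̂₂(X)² − 2(τ̂₁(X) − τ̂₂(X))·Γ) ≤ (2Mτ + 4M/η + 4M)² · E[(τ̂₁(X) − τ̂₂(X))²]`. -/
theorem relative_error_variance_upper_bound
    {Ω 𝒳 : Type*} [MeasurableSpace Ω] [m𝒳 : MeasurableSpace 𝒳]
    (P : Measure Ω) [IsProbabilityMeasure P]
    (X : Ω → 𝒳) (W Y : Ω → ℝ)
    (hX : Measurable X) (hW : Measurable W) (hY : Measurable Y)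
    (hW01 : ∀ᵐ ω ∂P, W ω = 0 ∨ W ω = 1)
    (M : ℝ) (hM : 0 < M) (hYb : ∀ᵐ ω ∂P, |Y ω| ≤ M)
    (e μ₀ μ₁ : 𝒳 → ℝ)
    (he : Measurable e) (hμ₀ : Measurable μ₀) (hμ₁ : Measurable μ₁)
    (hμ₀b : ∀ x, |μ₀ x| ≤ M) (hμ₁b : ∀ x, |μ₁ x| ≤ M)
    (η : ℝ) (hη₀ : 0 < η) (hη₁ : η < 1/2)
    (heb : ∀ x, η ≤ e x ∧ e x ≤ 1 - η)
    (hce : P[W | m𝒳.comap X] =ᵐ[P] fun ω => e (X ω))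
    (hc1 : P[fun ω => W ω * Y ω | m𝒳.comap X] =ᵐ[P] fun ω => e (X ω) * μ₁ (X ω))
    (hc0 : P[fun ω => (1 - W ω) * Y ω | m𝒳.comap X]
        =ᵐ[P] fun ω => (1 - e (X ω)) * μ₀ (X ω))
    (τhat₁ τhat₂ : 𝒳 → ℝ) (Mτ : ℝ)
    (hτ₁ : Measurable τhat₁) (hτ₂ : Measurable τhat₂)
    (hτ₁b : ∀ x, |τhat₁ x| ≤ Mτ) (hτ₂b : ∀ x, |τhat₂ x| ≤ Mτ) :
    variance (fun ω => τhat₁ (X ω) ^ 2 - τhat₂ (X ω) ^ 2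
        - 2 * (τhat₁ (X ω) - τhat₂ (X ω))
          * (W ω * (Y ω - μ₁ (X ω)) / e (X ω) + μ₁ (X ω)
            - (1 - W ω) * (Y ω - μ₀ (X ω)) / (1 - e (X ω)) - μ₀ (X ω))) P
      ≤ (2 * Mτ + 4 * M / η + 4 * M) ^ 2 * ∫ ω, (τhat₁ (X ω) - τhat₂ (X ω)) ^ 2 ∂P := by
  have hmeas : Measurable (fun ω => τhat₁ (X ω) ^ 2 - τhat₂ (X ω) ^ 2
        - 2 * (τhat₁ (X ω) - τhat₂ (X ω))
          * (W ω * (Y ω - μ₁ (X ω)) / e (X ω) + μ₁ (X ω)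
            - (1 - W ω) * (Y ω - μ₀ (X ω)) / (1 - e (X ω)) - μ₀ (X ω))) := by
    fun_prop
  have hdm : Measurable (fun ω => (τhat₁ (X ω) - τhat₂ (X ω)) ^ 2) := by fun_prop
  have hint : Integrable (fun ω => (τhat₁ (X ω) - τhat₂ (X ω)) ^ 2) P := by
    refine Integrable.of_bound hdm.aestronglyMeasurable ((2 * Mτ) ^ 2) ?_
    refine Filter.Eventually.of_forall fun ω => ?_
    rw [Real.norm_eq_abs, abs_of_nonneg (sq_nonneg _)]
    have h1 := abs_le.mp (hτ₁b (X ω))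
    have h2 := abs_le.mp (hτ₂b (X ω))
    apply sq_le_sq'
    · linarith
    · linarith
  refine (variance_le_expectation_sq hmeas.aestronglyMeasurable).trans ?_
  rw [← integral_const_mul]
  refine integral_mono_of_nonneg (Filter.Eventually.of_forall fun ω => sq_nonneg _)
    (hint.const_mul _) ?_
  filter_upwards [hW01, hYb] with ω hw hy
  have key : ∀ a b p : ℝ, |a| ≤ M → |b| ≤ M → η ≤ p → |(a - b) / p| ≤ 2 * M / η := by
    intro a b p ha hb hp
    rw [abs_div, abs_of_pos (hη₀.trans_le hp)]
    have : |a - b| ≤ 2 * M := by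
      rw [abs_le] at *
      constructor <;> linarith
    exact div_le_div₀ (by linarith) (by linarith) hη₀ hp
  have h1 := abs_le.mp (hτ₁b (X ω))
  have h2 := abs_le.mp (hτ₂b (X ω))
  have m0 := abs_le.mp (hμ₀b (X ω))
  have m1 := abs_le.mp (hμ₁b (X ω))
  have k1 := abs_le.mp (key _ _ _ hy (hμ₁b (X ω)) (heb (X ω)).1)
  have k0 := abs_le.mp (key _ _ (1 - e (X ω)) hy (hμ₀b (X ω)) (by linarith [(heb (X ω)).2]))
  have hK : 4 * M / η = 2 * (2 * M / η) := by ring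
  have hG : |W ω * (Y ω - μ₁ (X ω)) / e (X ω) + μ₁ (X ω)
            - (1 - W ω) * (Y ω - μ₀ (X ω)) / (1 - e (X ω)) - μ₀ (X ω)| ≤ 2 * M / η + 2 * M := by
    rw [abs_le]
    rcases hw with hw | hw <;> rw [hw] <;> simp only [zero_mul, one_mul, sub_zero, sub_self, zero_div] <;>
      constructor <;> linarith
  simp only [Pi.pow_apply]
  generalize W ω * (Y ω - μ₁ (X ω)) / e (X ω) + μ₁ (X ω)
            - (1 - W ω) * (Y ω - μ₀ (X ω)) / (1 - e (X ω)) - μ₀ (X ω) = G at hG ⊢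
  have hG2 := abs_le.mp hG
  have hs : (τhat₁ (X ω) + τhat₂ (X ω) - 2 * G) ^ 2 ≤ (2 * Mτ + 4 * M / η + 4 * M) ^ 2 := by
    apply sq_le_sq' <;> linarith
  calc _ = (τhat₁ (X ω) + τhat₂ (X ω) - 2 * G) ^ 2 * (τhat₁ (X ω) - τhat₂ (X ω)) ^ 2 := by ring
    _ ≤ _ := mul_le_mul_of_nonneg_right hs (sq_nonneg _)
end

section
/- Variance lower bound for the relative error influence function (non-degeneracy under condition (c) of Theorem 2): under the additive noise model, for any bounded measurable τ̂₁, τ̂₂ : 𝒳 → ℝ, Var( τ̂₁(X)² − τ̂₂(X)² − 2(τ̂₁(X) − τ̂₂(X))·Γ ) ≥ 16·σ²·E[(τ̂₁(X) − τ̂₂(X))²]. In particular, if E[(τ̂₁(X) − τ̂₂(X))²] > 0 and σ² > 0, the influence function has strictly positive variance. -/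
open MeasureTheory ProbabilityTheory

lemma aux_var {Ω 𝒵 : Type*} [MeasurableSpace Ω] [MeasurableSpace 𝒵]
    (P : Measure Ω) [IsProbabilityMeasure P] (Z : Ω → 𝒵) (hZ : Measurable Z)
    (ε : Ω → ℝ) (hε : Measurable ε) (hindep : IndepFun Z ε P)
    (hε2 : MemLp ε 2 P) (hεmean : ∫ ω, ε ω ∂P = 0)
    (g h : 𝒵 → ℝ) (hg : Measurable g) (hh : Measurable h)
    (B C : ℝ) (hgb : ∀ᵐ ω ∂P, |g (Z ω)| ≤ B) (hhb : ∀ᵐ ω ∂P, |h (Z ω)| ≤ C) :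
    variance ε P * ∫ ω, h (Z ω) ^ 2 ∂P ≤ variance (fun ω => g (Z ω) + h (Z ω) * ε ω) P := by
  have hG : MemLp (fun ω => g (Z ω)) ⊤ P :=
    memLp_top_of_bound (hg.comp hZ).aestronglyMeasurable B (by simpa using hgb)
  have hH : MemLp (fun ω => h (Z ω)) ⊤ P :=
    memLp_top_of_bound (hh.comp hZ).aestronglyMeasurable C (by simpa using hhb)
  have hG2 : MemLp (fun ω => g (Z ω)) 2 P := hG.mono_exponent le_top
  have hHe : MemLp (fun ω => h (Z ω) * ε ω) 2 P := hε2.mul' hH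
  have e1 : ∫ ω, h (Z ω) * ε ω ∂P = 0 := by
    have := (hindep.comp hh measurable_id).integral_fun_mul_eq_mul_integral
      (hh.comp hZ).aestronglyMeasurable hε.aestronglyMeasurable
    simp only [Function.comp, id, hεmean, mul_zero] at this
    exact this
  have e2 : ∫ ω, g (Z ω) * (h (Z ω) * ε ω) ∂P = 0 := by
    have := (hindep.comp (hg.mul hh) measurable_id).integral_fun_mul_eq_mul_integral
      ((hg.mul hh).comp hZ).aestronglyMeasurable hε.aestronglyMeasurable
    simp only [Function.comp, id, hεmean, mul_zero, Pi.mul_apply, mul_assoc] at this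
    exact this
  have e3 : ∫ ω, (h (Z ω) * ε ω) ^ 2 ∂P = (∫ ω, h (Z ω) ^ 2 ∂P) * ∫ ω, ε ω ^ 2 ∂P := by
    have := (hindep.comp (hh.pow_const 2) (measurable_id.pow_const 2)).integral_fun_mul_eq_mul_integral
      ((hh.pow_const 2).comp hZ).aestronglyMeasurable (hε.pow_const 2).aestronglyMeasurable
    simp only [Function.comp, id] at this
    simp only [mul_pow]
    exact this
  have c : cov[fun ω => g (Z ω), fun ω => h (Z ω) * ε ω; P] = 0 := by
    rw [covariance_eq_sub hG2 hHe, e1]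
    simp only [Pi.mul_apply, e2, mul_zero, sub_zero]
  have v1 : variance (fun ω => h (Z ω) * ε ω) P = (∫ ω, h (Z ω) ^ 2 ∂P) * ∫ ω, ε ω ^ 2 ∂P := by
    rw [variance_of_integral_eq_zero hHe.aestronglyMeasurable.aemeasurable e1, e3]
  have v2 : variance ε P = ∫ ω, ε ω ^ 2 ∂P :=
    variance_of_integral_eq_zero hε.aemeasurable hεmean
  have v := variance_fun_add hG2 hHe
  have := variance_nonneg (fun ω => g (Z ω)) P
  rw [v, c, v1, v2]
  linarith

lemma aux_ce {Ω 𝒳 : Type*} [MeasurableSpace Ω] [m𝒳 : MeasurableSpace 𝒳]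
    (P : Measure Ω) [IsProbabilityMeasure P]
    (X : Ω → 𝒳) (W : Ω → ℝ) (hX : Measurable X) (hW : Integrable W P)
    (e : 𝒳 → ℝ) (hce : P[W | m𝒳.comap X] =ᵐ[P] fun ω => e (X ω))
    (k : 𝒳 → ℝ) (hk : Measurable k) (K : ℝ) (hkb : ∀ x, |k x| ≤ K) :
    ∫ ω, k (X ω) * W ω ∂P = ∫ ω, k (X ω) * e (X ω) ∂P := by
  have hkm : StronglyMeasurable[m𝒳.comap X] (fun ω => k (X ω)) :=
    (hk.comp (comap_measurable X)).stronglyMeasurable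
  have hint : Integrable (fun ω => k (X ω) * W ω) P :=
    hW.bdd_mul (hk.comp hX).aestronglyMeasurable (c := K) (ae_of_all _ fun ω => by simpa using hkb _)
  have := condExp_mul_of_stronglyMeasurable_left hkm hint hW
  rw [← integral_condExp hX.comap_le]
  refine integral_congr_ae ?_
  filter_upwards [this, hce] with ω h1 h2
  have h3 : (P[fun ω => k (X ω) * W ω | m𝒳.comap X]) ω = k (X ω) * (P[W | m𝒳.comap X]) ω := h1
  rw [h3, h2]

/-- Variance lower bound for the relative error influence function (non-degeneracy): under the
additive noise model, `Var(τ̂₁(X)² − τ̂₂(X)² − 2(τ̂₁(X) − τ̂₂(X))·Γ) ≥ 16σ²·E[(τ̂₁(X) − τ̂₂(X))²]`. -/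
theorem relative_error_variance_lower_bound
    {Ω 𝒳 : Type*} [MeasurableSpace Ω] [m𝒳 : MeasurableSpace 𝒳]
    (P : Measure Ω) [IsProbabilityMeasure P]
    (X : Ω → 𝒳) (W Y : Ω → ℝ)
    (hX : Measurable X) (hW : Measurable W) (hY : Measurable Y)
    (hW01 : ∀ᵐ ω ∂P, W ω = 0 ∨ W ω = 1)
    (e μ₀ μ₁ : 𝒳 → ℝ)
    (he : Measurable e) (hμ₀ : Measurable μ₀) (hμ₁ : Measurable μ₁)
    (C₀ C₁ : ℝ) (hμ₀b : ∀ x, |μ₀ x| ≤ C₀) (hμ₁b : ∀ x, |μ₁ x| ≤ C₁)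
    (η : ℝ) (hη₀ : 0 < η) (hη₁ : η < 1/2)
    (heb : ∀ x, η ≤ e x ∧ e x ≤ 1 - η)
    (hce : P[W | m𝒳.comap X] =ᵐ[P] fun ω => e (X ω))
    (ε : Ω → ℝ) (hε : Measurable ε)
    (hindep : IndepFun (fun ω => (X ω, W ω)) ε P)
    (hε2 : MemLp ε 2 P) (hεmean : ∫ ω, ε ω ∂P = 0)
    (σ2 : ℝ) (hεvar : variance ε P = σ2)
    (hmodel : ∀ᵐ ω ∂P, Y ω = W ω * μ₁ (X ω) + (1 - W ω) * μ₀ (X ω) + ε ω) :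
    ∀ (τhat₁ τhat₂ : 𝒳 → ℝ) (B₁ B₂ : ℝ), Measurable τhat₁ → Measurable τhat₂ →
      (∀ x, |τhat₁ x| ≤ B₁) → (∀ x, |τhat₂ x| ≤ B₂) →
      variance (fun ω => τhat₁ (X ω) ^ 2 - τhat₂ (X ω) ^ 2
          - 2 * (τhat₁ (X ω) - τhat₂ (X ω))
            * (W ω * (Y ω - μ₁ (X ω)) / e (X ω) + μ₁ (X ω)
              - (1 - W ω) * (Y ω - μ₀ (X ω)) / (1 - e (X ω)) - μ₀ (X ω))) P
        ≥ 16 * σ2 * ∫ ω, (τhat₁ (X ω) - τhat₂ (X ω)) ^ 2 ∂P := by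
  intro τ₁ τ₂ B₁ B₂ hτ₁ hτ₂ hB₁ hB₂
  have hWi : Integrable W P := by
    refine Integrable.of_bound hW.aestronglyMeasurable 1 ?_
    filter_upwards [hW01] with ω h
    rcases h with h | h <;> simp [h]
  have hep : ∀ x, 0 < e x := fun x => lt_of_lt_of_le hη₀ (heb x).1
  have hep' : ∀ x, 0 < 1 - e x := fun x => by linarith [(heb x).2]
  have hi : ∀ x, (e x)⁻¹ ≤ η⁻¹ := fun x => inv_anti₀ hη₀ (heb x).1
  have hi' : ∀ x, (1 - e x)⁻¹ ≤ η⁻¹ := fun x => inv_anti₀ hη₀ (by linarith [(heb x).2])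
  have hd : ∀ x, |τ₁ x - τ₂ x| ≤ B₁ + B₂ := fun x =>
    (abs_sub _ _).trans (add_le_add (hB₁ x) (hB₂ x))
  have hd2 : ∀ x, (τ₁ x - τ₂ x) ^ 2 ≤ (B₁ + B₂) ^ 2 := fun x =>
    sq_le_sq' (abs_le.1 (hd x)).1 (abs_le.1 (hd x)).2
  have hBB : ∀ x : 𝒳, 0 ≤ B₁ + B₂ := fun x => (abs_nonneg _).trans (hd x)
  have hsq : ∀ x, ((e x)⁻¹) ^ 2 ≤ (η⁻¹) ^ 2 := fun x =>
    pow_le_pow_left₀ (inv_pos.2 (hep x)).le (hi x) 2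
  have hsq' : ∀ x, ((1 - e x)⁻¹) ^ 2 ≤ (η⁻¹) ^ 2 := fun x =>
    pow_le_pow_left₀ (inv_pos.2 (hep' x)).le (hi' x) 2
  let g : 𝒳 × ℝ → ℝ := fun z => τ₁ z.1 ^ 2 - τ₂ z.1 ^ 2 - 2 * (τ₁ z.1 - τ₂ z.1) * (μ₁ z.1 - μ₀ z.1)
  let h : 𝒳 × ℝ → ℝ := fun z =>
    -2 * (τ₁ z.1 - τ₂ z.1) * (z.2 * (e z.1)⁻¹ - (1 - z.2) * (1 - e z.1)⁻¹)
  let k : 𝒳 → ℝ := fun x => (τ₁ x - τ₂ x) ^ 2 * (((e x)⁻¹) ^ 2 - ((1 - e x)⁻¹) ^ 2)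
  let l : 𝒳 → ℝ := fun x => (τ₁ x - τ₂ x) ^ 2 * ((1 - e x)⁻¹) ^ 2
  have hg : Measurable g := by fun_prop
  have hh : Measurable h := by fun_prop
  have hk : Measurable k := by fun_prop
  have hl : Measurable l := by fun_prop
  have hkb : ∀ x, |k x| ≤ (B₁ + B₂) ^ 2 * (η⁻¹) ^ 2 := fun x => by
    simp only [k]
    rw [abs_mul, abs_of_nonneg (sq_nonneg (τ₁ x - τ₂ x))]
    refine mul_le_mul (hd2 x) ?_ (abs_nonneg _) (sq_nonneg _)
    rw [abs_le]
    constructor <;> nlinarith [hsq x, hsq' x, sq_nonneg (e x)⁻¹, sq_nonneg (1 - e x)⁻¹]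
  have hlb : ∀ x, |l x| ≤ (B₁ + B₂) ^ 2 * (η⁻¹) ^ 2 := fun x => by
    simp only [l]
    rw [abs_of_nonneg (by positivity)]
    exact mul_le_mul (hd2 x) (hsq' x) (sq_nonneg _) (sq_nonneg _)
  have hgb : ∀ᵐ ω ∂P, |g (X ω, W ω)| ≤ B₁ ^ 2 + B₂ ^ 2 + 2 * (B₁ + B₂) * (C₁ + C₀) := by
    refine ae_of_all _ fun ω => ?_
    simp only [g]
    generalize X ω = x
    have a1 : τ₁ x ^ 2 ≤ B₁ ^ 2 := sq_le_sq' (abs_le.1 (hB₁ x)).1 (abs_le.1 (hB₁ x)).2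
    have a2 : τ₂ x ^ 2 ≤ B₂ ^ 2 := sq_le_sq' (abs_le.1 (hB₂ x)).1 (abs_le.1 (hB₂ x)).2
    have a3 : |(τ₁ x - τ₂ x) * (μ₁ x - μ₀ x)| ≤ (B₁ + B₂) * (C₁ + C₀) := by
      rw [abs_mul]
      exact mul_le_mul (hd x) ((abs_sub _ _).trans (add_le_add (hμ₁b x) (hμ₀b x)))
        (abs_nonneg _) (hBB x)
    rw [abs_le] at a3 ⊢
    constructor <;> nlinarith [a3.1, a3.2, sq_nonneg (τ₁ x), sq_nonneg (τ₂ x)]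
  have hhb : ∀ᵐ ω ∂P, |h (X ω, W ω)| ≤ 2 * (B₁ + B₂) * η⁻¹ := by
    filter_upwards [hW01] with ω hw
    simp only [h]
    rw [abs_mul, abs_mul]
    have b := hBB (X ω)
    refine mul_le_mul ?_ ?_ (abs_nonneg _) (by positivity)
    · simpa using hd (X ω)
    · rcases hw with hw | hw
      · simpa [hw, abs_of_pos (hep' (X ω))] using hi' (X ω)
      · simpa [hw, abs_of_pos (hep (X ω))] using hi (X ω)
  have key := aux_var P (fun ω => (X ω, W ω)) (hX.prodMk hW) ε hε hindep hε2 hεmean g h hg hh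
    _ _ hgb hhb
  have hvar : variance (fun ω => τ₁ (X ω) ^ 2 - τ₂ (X ω) ^ 2
          - 2 * (τ₁ (X ω) - τ₂ (X ω))
            * (W ω * (Y ω - μ₁ (X ω)) / e (X ω) + μ₁ (X ω)
              - (1 - W ω) * (Y ω - μ₀ (X ω)) / (1 - e (X ω)) - μ₀ (X ω))) P
      = variance (fun ω => g (X ω, W ω) + h (X ω, W ω) * ε ω) P := by
    refine variance_congr ?_
    filter_upwards [hW01, hmodel] with ω hw hm
    simp only [g, h, hm, div_eq_mul_inv]
    rcases hw with hw | hw <;> simp only [hw] <;> ring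
  rw [hvar]
  refine ge_iff_le.2 (le_trans ?_ key)
  have hσ : 0 ≤ σ2 := hεvar ▸ variance_nonneg ε P
  rw [hεvar, mul_comm 16 σ2, mul_assoc]
  refine mul_le_mul_of_nonneg_left ?_ hσ
  have ik : Integrable (fun ω => k (X ω) * W ω) P :=
    hWi.bdd_mul (hk.comp hX).aestronglyMeasurable (c := (B₁ + B₂) ^ 2 * (η⁻¹) ^ 2)
      (ae_of_all _ fun ω => by simpa using hkb (X ω))
  have il : Integrable (fun ω => l (X ω)) P :=
    Integrable.of_bound (hl.comp hX).aestronglyMeasurable ((B₁ + B₂) ^ 2 * (η⁻¹) ^ 2)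
      (ae_of_all _ fun ω => by simpa using hlb (X ω))
  have ike : Integrable (fun ω => k (X ω) * e (X ω)) P := by
    refine Integrable.of_bound ((hk.mul he).comp hX).aestronglyMeasurable
      ((B₁ + B₂) ^ 2 * (η⁻¹) ^ 2 * 1) (ae_of_all _ fun ω => ?_)
    rw [Real.norm_eq_abs, abs_mul]
    refine mul_le_mul (hkb _) ?_ (abs_nonneg _) (by positivity)
    rw [abs_of_pos (hep _)]
    linarith [hep' (X ω)]
  have id2 : Integrable (fun ω => (τ₁ (X ω) - τ₂ (X ω)) ^ 2) P := by
    refine Integrable.of_bound (((hτ₁.sub hτ₂).pow_const 2).comp hX).aestronglyMeasurable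
      ((B₁ + B₂) ^ 2) (ae_of_all _ fun ω => ?_)
    rw [Real.norm_eq_abs, abs_of_nonneg (sq_nonneg _)]
    exact hd2 _
  have e1 : ∫ ω, h (X ω, W ω) ^ 2 ∂P = 4 * ∫ ω, (k (X ω) * e (X ω) + l (X ω)) ∂P := by
    rw [integral_add ike il, ← aux_ce P X W hX hWi e hce k hk _ hkb, ← integral_add ik il,
      ← integral_const_mul]
    refine integral_congr_ae ?_
    filter_upwards [hW01] with ω hw
    simp only [h, k, l]
    rcases hw with hw | hw <;> simp only [hw] <;> ring
  rw [e1]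
  have e2 : 4 * ∫ ω, (τ₁ (X ω) - τ₂ (X ω)) ^ 2 ∂P ≤ ∫ ω, (k (X ω) * e (X ω) + l (X ω)) ∂P := by
    rw [← integral_const_mul]
    refine integral_mono (id2.const_mul 4) (ike.add il) fun ω => ?_
    simp only [k, l]
    generalize X ω = x
    have h1 := hep x
    have h2 := hep' x
    have h3 : (((e x)⁻¹) ^ 2 - ((1 - e x)⁻¹) ^ 2) * e x + ((1 - e x)⁻¹) ^ 2
        = 1 / (e x * (1 - e x)) := by
      field_simp
      ring
    have h4 : 4 ≤ 1 / (e x * (1 - e x)) := by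
      rw [le_div_iff₀ (mul_pos h1 h2)]
      nlinarith [sq_nonneg (2 * e x - 1)]
    rw [← h3] at h4
    nlinarith [mul_le_mul_of_nonneg_left h4 (sq_nonneg (τ₁ x - τ₂ x))]
  linarith
end

section
/- Variance lower bound for the absolute error influence function (non-degeneracy under condition (c) of Theorem 1): under the additive noise model, for any bounded measurable τ̂ : 𝒳 → ℝ, Var( (τ(X) − τ̂(X))² + 2(τ(X) − τ̂(X))·R ) ≥ 16·σ²·φ(τ̂), where R := W(Y − μ₁(X))/e(X) − (1−W)(Y − μ₀(X))/(1−e(X)). In particular, if φ(τ̂) > 0 and σ² > 0, the influence function has strictly positive variance. -/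
open MeasureTheory ProbabilityTheory

/-- Variance lower bound for the absolute error influence function (non-degeneracy): under the
additive noise model, `Var((τ(X) − τ̂(X))² + 2(τ(X) − τ̂(X))·R) ≥ 16σ²·φ(τ̂)`, where
`R := W(Y − μ₁(X))/e(X) − (1−W)(Y − μ₀(X))/(1−e(X))` and `φ(τ̂) := E[(τ̂(X) − τ(X))²]`. -/
theorem absolute_error_variance_lower_bound
    {Ω 𝒳 : Type*} [MeasurableSpace Ω] [m𝒳 : MeasurableSpace 𝒳]
    (P : Measure Ω) [IsProbabilityMeasure P]
    (X : Ω → 𝒳) (W Y : Ω → ℝ)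
    (hX : Measurable X) (hW : Measurable W) (hY : Measurable Y)
    (hW01 : ∀ᵐ ω ∂P, W ω = 0 ∨ W ω = 1)
    (e μ₀ μ₁ : 𝒳 → ℝ)
    (he : Measurable e) (hμ₀ : Measurable μ₀) (hμ₁ : Measurable μ₁)
    (C₀ C₁ : ℝ) (hμ₀b : ∀ x, |μ₀ x| ≤ C₀) (hμ₁b : ∀ x, |μ₁ x| ≤ C₁)
    (η : ℝ) (hη₀ : 0 < η) (hη₁ : η < 1/2)
    (heb : ∀ x, η ≤ e x ∧ e x ≤ 1 - η)
    (hce : P[W | m𝒳.comap X] =ᵐ[P] fun ω => e (X ω))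
    (ε : Ω → ℝ) (hε : Measurable ε)
    (hindep : IndepFun (fun ω => (X ω, W ω)) ε P)
    (hε2 : MemLp ε 2 P) (hεmean : ∫ ω, ε ω ∂P = 0)
    (σ2 : ℝ) (hεvar : variance ε P = σ2)
    (hmodel : ∀ᵐ ω ∂P, Y ω = W ω * μ₁ (X ω) + (1 - W ω) * μ₀ (X ω) + ε ω) :
    ∀ (τhat : 𝒳 → ℝ) (B : ℝ), Measurable τhat → (∀ x, |τhat x| ≤ B) →
      variance (fun ω => ((μ₁ (X ω) - μ₀ (X ω)) - τhat (X ω)) ^ 2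
          + 2 * ((μ₁ (X ω) - μ₀ (X ω)) - τhat (X ω))
            * (W ω * (Y ω - μ₁ (X ω)) / e (X ω)
              - (1 - W ω) * (Y ω - μ₀ (X ω)) / (1 - e (X ω)))) P
        ≥ 16 * σ2 * ∫ ω, (τhat (X ω) - (μ₁ (X ω) - μ₀ (X ω))) ^ 2 ∂P := by
  intro τhat B hτ hτb
  set d : 𝒳 → ℝ := fun x => (μ₁ x - μ₀ x) - τhat x with hd
  set p : 𝒳 → ℝ := fun x => (e x)⁻¹ with hp
  set q : 𝒳 → ℝ := fun x => (1 - e x)⁻¹ with hq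
  have hdm : Measurable d := (hμ₁.sub hμ₀).sub hτ
  have hpm : Measurable p := he.inv
  have hqm : Measurable q := (measurable_const.sub he).inv
  have e0 : ∀ x, 0 < e x := fun x => lt_of_lt_of_le hη₀ (heb x).1
  have e1 : ∀ x, 0 < 1 - e x := fun x => by linarith [(heb x).2]
  have dL : MemLp (fun ω => d (X ω)) ⊤ P := by
    refine memLp_top_of_bound (hdm.comp hX).aestronglyMeasurable (C₁ + C₀ + B)
      (ae_of_all _ fun ω => ?_)
    have h1 := abs_le.1 (hμ₁b (X ω))
    have h2 := abs_le.1 (hμ₀b (X ω))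
    have h3 := abs_le.1 (hτb (X ω))
    rw [Real.norm_eq_abs, abs_le]
    constructor <;> simp only [hd] <;> linarith
  have pL : MemLp (fun ω => p (X ω)) ⊤ P := by
    refine memLp_top_of_bound (hpm.comp hX).aestronglyMeasurable (η⁻¹)
      (ae_of_all _ fun ω => ?_)
    rw [Real.norm_eq_abs, abs_of_pos (inv_pos.2 (e0 _))]
    exact inv_anti₀ hη₀ (heb _).1
  have qL : MemLp (fun ω => q (X ω)) ⊤ P := by
    refine memLp_top_of_bound (hqm.comp hX).aestronglyMeasurable (η⁻¹)
      (ae_of_all _ fun ω => ?_)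
    rw [Real.norm_eq_abs, abs_of_pos (inv_pos.2 (e1 _))]
    exact inv_anti₀ hη₀ (by linarith [(heb (X ω)).2])
  have eL : MemLp (fun ω => e (X ω)) ⊤ P := by
    refine memLp_top_of_bound (he.comp hX).aestronglyMeasurable 1
      (ae_of_all _ fun ω => ?_)
    rw [Real.norm_eq_abs, abs_of_pos (e0 _)]
    linarith [e1 (X ω)]
  have wL : MemLp W ⊤ P := by
    refine memLp_top_of_bound hW.aestronglyMeasurable 1 ?_
    filter_upwards [hW01] with ω h
    rcases h with h | h <;> simp [h]
  have oneL : MemLp (fun _ : Ω => (1 : ℝ)) ⊤ P := memLp_const 1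
  have w'L : MemLp (fun ω => 1 - W ω) ⊤ P := oneL.sub wL
  have d2L : MemLp (fun ω => d (X ω) * d (X ω)) ⊤ P := dL.mul' dL
  set b : 𝒳 × ℝ → ℝ := fun z => 2 * d z.1 * (z.2 * p z.1 - (1 - z.2) * q z.1) with hb
  have hbm : Measurable b := by fun_prop
  have bL : MemLp (fun ω => b (X ω, W ω)) ⊤ P := by
    have h1 : MemLp (fun ω => W ω * p (X ω)) ⊤ P := pL.mul' wL
    have h2 : MemLp (fun ω => (1 - W ω) * q (X ω)) ⊤ P := qL.mul' w'L
    have h3 : MemLp (fun ω => W ω * p (X ω) - (1 - W ω) * q (X ω)) ⊤ P := h1.sub h2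
    exact h3.mul' (dL.const_mul 2)
  have hXW : Measurable (fun ω => (X ω, W ω)) := hX.prodMk hW
  have beL : MemLp (fun ω => b (X ω, W ω) * ε ω) 2 P := hε2.mul' bL
  have d22 : MemLp (fun ω => d (X ω) * d (X ω)) 2 P := d2L.mono_exponent le_top
  have hfac : ∀ f : 𝒳 × ℝ → ℝ, Measurable f → ∀ g : ℝ → ℝ, Measurable g →
      ∫ ω, f (X ω, W ω) * g (ε ω) ∂P = (∫ ω, f (X ω, W ω) ∂P) * ∫ ω, g (ε ω) ∂P :=
    fun f hf g hg => hindep.integral_fun_comp_mul_comp hXW.aemeasurable hε.aemeasurable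
      hf.aestronglyMeasurable hg.aestronglyMeasurable
  have hbe0 : ∫ ω, b (X ω, W ω) * ε ω ∂P = 0 := by
    have := hfac b hbm id measurable_id
    simpa [hεmean] using this
  have hs : σ2 = ∫ ω, ε ω ^ 2 ∂P := by
    rw [← hεvar, variance_of_integral_eq_zero hε.aemeasurable hεmean]
  have hs0 : 0 ≤ σ2 := hεvar ▸ variance_nonneg _ _
  have hvarbe : variance (fun ω => b (X ω, W ω) * ε ω) P
      = (∫ ω, b (X ω, W ω) ^ 2 ∂P) * σ2 := by
    rw [variance_of_integral_eq_zero beL.aemeasurable hbe0, hs]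
    have := hfac (fun z => b z ^ 2) (hbm.pow_const 2) (fun t => t ^ 2) (by fun_prop)
    rw [← this]
    simp only [mul_pow]
  have hcov : covariance (fun ω => d (X ω) * d (X ω)) (fun ω => b (X ω, W ω) * ε ω) P = 0 := by
    rw [covariance_eq_sub d22 beL, hbe0, mul_zero, sub_zero]
    have := hfac (fun z => d z.1 * d z.1 * b z) (by fun_prop) id measurable_id
    simp only [id, hεmean, mul_zero] at this
    rw [← this]
    refine integral_congr_ae (ae_of_all _ fun ω => ?_)
    simp only [Pi.mul_apply]
    ring
  have hvar : variance (fun ω => ((μ₁ (X ω) - μ₀ (X ω)) - τhat (X ω)) ^ 2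
          + 2 * ((μ₁ (X ω) - μ₀ (X ω)) - τhat (X ω))
            * (W ω * (Y ω - μ₁ (X ω)) / e (X ω)
              - (1 - W ω) * (Y ω - μ₀ (X ω)) / (1 - e (X ω)))) P
      = variance (fun ω => d (X ω) * d (X ω) + b (X ω, W ω) * ε ω) P := by
    apply variance_congr
    filter_upwards [hW01, hmodel] with ω h hm
    rcases h with h | h <;> simp only [h, hm, hb, hd, hp, hq, div_eq_mul_inv] <;> ring
  rw [hvar, variance_fun_add d22 beL, hcov, hvarbe]
  -- the weight identity
  set k : 𝒳 → ℝ := fun x => 4 * (d x * d x) * (p x * p x - q x * q x) with hk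
  have hkm : Measurable k := by fun_prop
  have kL : MemLp (fun ω => k (X ω)) ⊤ P := by
    have h1 : MemLp (fun ω => p (X ω) * p (X ω)) ⊤ P := pL.mul' pL
    have h2 : MemLp (fun ω => q (X ω) * q (X ω)) ⊤ P := qL.mul' qL
    have h3 : MemLp (fun ω => p (X ω) * p (X ω) - q (X ω) * q (X ω)) ⊤ P := h1.sub h2
    exact h3.mul' (d2L.const_mul 4)
  have kwL : MemLp (fun ω => k (X ω) * W ω) ⊤ P := wL.mul' kL
  have keL : MemLp (fun ω => k (X ω) * e (X ω)) ⊤ P := eL.mul' kL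
  have b2L : MemLp (fun ω => b (X ω, W ω) * b (X ω, W ω)) ⊤ P := bL.mul' bL
  have hkw : ∫ ω, k (X ω) * W ω ∂P = ∫ ω, k (X ω) * e (X ω) ∂P := by
    have hm : m𝒳.comap X ≤ _ := hX.comap_le
    have hks : StronglyMeasurable[m𝒳.comap X] (fun ω => k (X ω)) :=
      (hkm.comp (comap_measurable X)).stronglyMeasurable
    have h1 := condExp_mul_of_stronglyMeasurable_left (μ := P) hks (g := W)
      (kwL.integrable le_top) (wL.integrable le_top)
    rw [← integral_condExp hm]
    refine integral_congr_ae ?_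
    filter_upwards [h1, hce] with ω h1 h2
    have h3 : (P[fun ω => k (X ω) * W ω | m𝒳.comap X]) ω = k (X ω) * (P[W | m𝒳.comap X]) ω := h1
    rw [h3, h2]
  have key : 16 * ∫ ω, (τhat (X ω) - (μ₁ (X ω) - μ₀ (X ω))) ^ 2 ∂P
      ≤ ∫ ω, b (X ω, W ω) ^ 2 ∂P := by
    have hi : ∫ ω, b (X ω, W ω) ^ 2 ∂P
        = ∫ ω, (b (X ω, W ω) * b (X ω, W ω) - (k (X ω) * W ω - k (X ω) * e (X ω))) ∂P := by
      have hkk : Integrable (fun ω => k (X ω) * W ω - k (X ω) * e (X ω)) P :=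
        (kwL.integrable le_top).sub (keL.integrable le_top)
      rw [integral_sub (b2L.integrable le_top) hkk,
        integral_sub (kwL.integrable le_top) (keL.integrable le_top), hkw]
      simp [pow_two]
    rw [hi, ← integral_const_mul]
    refine integral_mono_ae ?_ ((b2L.integrable le_top).sub
        ((kwL.integrable le_top).sub (keL.integrable le_top))) ?_
    · have : (fun ω => 16 * (τhat (X ω) - (μ₁ (X ω) - μ₀ (X ω))) ^ 2)
          = fun ω => 16 * (d (X ω) * d (X ω)) := by
        funext ω; simp only [hd]; ring
      rw [this]
      exact (d2L.integrable le_top).const_mul 16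
    · filter_upwards [hW01] with ω h
      have hpe : p (X ω) * e (X ω) = 1 := inv_mul_cancel₀ (e0 _).ne'
      have hqe : q (X ω) * (1 - e (X ω)) = 1 := inv_mul_cancel₀ (e1 _).ne'
      have hp0 : 0 < p (X ω) := inv_pos.2 (e0 _)
      have hq0 : 0 < q (X ω) := inv_pos.2 (e1 _)
      have hpq : p (X ω) + q (X ω) = p (X ω) * q (X ω) := by
        linear_combination (-q (X ω)) * hpe - p (X ω) * hqe
      have h4 : 4 ≤ p (X ω) + q (X ω) := by
        nlinarith [sq_nonneg (p (X ω) - q (X ω))]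
      have hD : (τhat (X ω) - (μ₁ (X ω) - μ₀ (X ω))) ^ 2 = d (X ω) * d (X ω) := by
        simp only [hd]; ring
      have hid : b (X ω, W ω) * b (X ω, W ω) - (k (X ω) * W ω - k (X ω) * e (X ω))
          = 4 * (d (X ω) * d (X ω)) * (p (X ω) + q (X ω)) := by
        simp only [hb, hk]
        generalize d (X ω) = D at *
        generalize p (X ω) = p' at *
        generalize q (X ω) = q' at *
        generalize e (X ω) = e' at *
        rcases h with h | h <;> rw [h]
        · linear_combination 4 * D * D * p' * hpe + 4 * D * D * q' * hqe
        · linear_combination 4 * D * D * p' * hpe + 4 * D * D * q' * hqe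
      show 16 * (τhat (X ω) - (μ₁ (X ω) - μ₀ (X ω))) ^ 2 ≤
        b (X ω, W ω) * b (X ω, W ω) - (k (X ω) * W ω - k (X ω) * e (X ω))
      rw [hid, hD]
      nlinarith [mul_self_nonneg (d (X ω))]
  have hA := variance_nonneg (fun ω => d (X ω) * d (X ω)) P
  have := mul_le_mul_of_nonneg_right key hs0
  linarith
end

section
/- Unbiasedness of the DINA (difference in natural parameters) pseudo-outcome with true nuisance functions: let ℓ : ℝ → ℝ be a differentiable link function with derivative ℓ′, with ℓ and ℓ′ bounded on the range of μ₀ and μ₁. Then for every bounded measurable h : 𝒳 → ℝ, E[ h(X)·( W·ℓ′(μ₁(X))·(Y − μ₁(X))/e(X) + ℓ(μ₁(X)) − (1−W)·ℓ′(μ₀(X))·(Y − μ₀(X))/(1−e(X)) − ℓ(μ₀(X)) ) ] = E[ h(X)·(ℓ(μ₁(X)) − ℓ(μ₀(X))) ], i.e., the DINA one-step integrand identifies the weighted average of the DINA treatment effect τ(x) = ℓ(μ₁(x)) − ℓ(μ₀(x)). -/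
open MeasureTheory ProbabilityTheory

theorem aux_pull {Ω 𝒳 : Type*} [MeasurableSpace Ω] [m𝒳 : MeasurableSpace 𝒳]
    (P : Measure Ω) [IsProbabilityMeasure P]
    (X : Ω → 𝒳) (hX : Measurable X) (Z : Ω → ℝ) (hZ : Integrable Z P) (k : 𝒳 → ℝ)
    (hk : P[Z | m𝒳.comap X] =ᵐ[P] fun ω => k (X ω))
    (g : 𝒳 → ℝ) (hg : Measurable g) (C : ℝ) (hgb : ∀ x, |g x| ≤ C) :
    Integrable (fun ω => g (X ω) * Z ω) P ∧
      ∫ ω, g (X ω) * Z ω ∂P = ∫ ω, g (X ω) * k (X ω) ∂P := by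
  have hi : Integrable (fun ω => g (X ω) * Z ω) P :=
    hZ.bdd_mul (hg.comp hX).aestronglyMeasurable (c := C)
      (Filter.Eventually.of_forall fun ω => hgb _)
  refine ⟨hi, ?_⟩
  have hm : m𝒳.comap X ≤ ‹MeasurableSpace Ω› := hX.comap_le
  have hs : StronglyMeasurable[m𝒳.comap X] (fun ω => g (X ω)) :=
    (hg.comp (comap_measurable X)).stronglyMeasurable
  have h1 := condExp_mul_of_stronglyMeasurable_left (μ := P) hs hi hZ
  rw [← integral_condExp hm]
  apply integral_congr_ae
  filter_upwards [h1, hk] with ω a b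
  have a' : (P[fun ω => g (X ω) * Z ω | m𝒳.comap X]) ω
    = g (X ω) * (P[Z | m𝒳.comap X]) ω := a
  rw [a', b]

/-- Unbiasedness of the DINA (difference in natural parameters) pseudo-outcome with true
nuisance functions: for a differentiable link `ℓ` with `ℓ` and `ℓ′` bounded on the ranges of
`μ₀, μ₁`, and every bounded measurable `h`, the DINA one-step integrand identifies the
weighted average of the DINA treatment effect `τ(x) = ℓ(μ₁(x)) − ℓ(μ₀(x))`. -/
theorem dina_one_step_unbiased
    {Ω 𝒳 : Type*} [MeasurableSpace Ω] [m𝒳 : MeasurableSpace 𝒳]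
    (P : Measure Ω) [IsProbabilityMeasure P]
    (X : Ω → 𝒳) (W Y : Ω → ℝ)
    (hX : Measurable X) (hW : Measurable W) (hY : Measurable Y)
    (hW01 : ∀ᵐ ω ∂P, W ω = 0 ∨ W ω = 1)
    (M : ℝ) (hM : 0 < M) (hYb : ∀ᵐ ω ∂P, |Y ω| ≤ M)
    (e μ₀ μ₁ : 𝒳 → ℝ)
    (he : Measurable e) (hμ₀ : Measurable μ₀) (hμ₁ : Measurable μ₁)
    (C₀ C₁ : ℝ) (hμ₀b : ∀ x, |μ₀ x| ≤ C₀) (hμ₁b : ∀ x, |μ₁ x| ≤ C₁)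
    (η : ℝ) (hη₀ : 0 < η) (hη₁ : η < 1/2)
    (heb : ∀ x, η ≤ e x ∧ e x ≤ 1 - η)
    (hce : P[W | m𝒳.comap X] =ᵐ[P] fun ω => e (X ω))
    (hc1 : P[fun ω => W ω * Y ω | m𝒳.comap X] =ᵐ[P] fun ω => e (X ω) * μ₁ (X ω))
    (hc0 : P[fun ω => (1 - W ω) * Y ω | m𝒳.comap X]
        =ᵐ[P] fun ω => (1 - e (X ω)) * μ₀ (X ω))
    (ℓ : ℝ → ℝ) (hℓ : Differentiable ℝ ℓ)
    (Cℓ : ℝ) (hℓb : ∀ x, |ℓ (μ₀ x)| ≤ Cℓ ∧ |ℓ (μ₁ x)| ≤ Cℓ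
        ∧ |deriv ℓ (μ₀ x)| ≤ Cℓ ∧ |deriv ℓ (μ₁ x)| ≤ Cℓ) :
    ∀ (h : 𝒳 → ℝ) (Ch : ℝ), Measurable h → (∀ x, |h x| ≤ Ch) →
      ∫ ω, h (X ω) * (W ω * deriv ℓ (μ₁ (X ω)) * (Y ω - μ₁ (X ω)) / e (X ω)
            + ℓ (μ₁ (X ω))
            - (1 - W ω) * deriv ℓ (μ₀ (X ω)) * (Y ω - μ₀ (X ω)) / (1 - e (X ω))
            - ℓ (μ₀ (X ω))) ∂P
        = ∫ ω, h (X ω) * (ℓ (μ₁ (X ω)) - ℓ (μ₀ (X ω))) ∂P := by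
  intro h Ch hh hhb
  have hWi : Integrable W P := by
    refine Integrable.of_bound hW.aestronglyMeasurable 1 ?_
    filter_upwards [hW01] with ω hω
    rcases hω with hω | hω <;> simp [hω]
  have hYi : Integrable Y P := Integrable.of_bound hY.aestronglyMeasurable M hYb
  have hWYi : Integrable (fun ω => W ω * Y ω) P := by
    refine hYi.bdd_mul hW.aestronglyMeasurable (c := 1) ?_
    filter_upwards [hW01] with ω hω
    rcases hω with hω | hω <;> simp [hω]
  have hVYi : Integrable (fun ω => (1 - W ω) * Y ω) P := by
    refine (hYi.sub hWYi).congr (Filter.Eventually.of_forall fun ω => ?_)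
    simp only [Pi.sub_apply]; ring
  have hmd := measurable_deriv ℓ
  have hmℓ : Measurable ℓ := hℓ.continuous.measurable
  have hinv1 : ∀ x, |(e x)⁻¹| ≤ η⁻¹ := fun x => by
    have := (heb x).1
    rw [abs_of_pos (inv_pos.mpr (hη₀.trans_le this))]; gcongr
  have hinv0 : ∀ x, |(1 - e x)⁻¹| ≤ η⁻¹ := fun x => by
    have : η ≤ 1 - e x := by linarith [(heb x).2]
    rw [abs_of_pos (inv_pos.mpr (hη₀.trans_le this))]; gcongr
  have bm : ∀ {a b A B : ℝ}, |a| ≤ A → |b| ≤ B → |a * b| ≤ A * B := fun {a b A B} ha hb => by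
    rw [abs_mul]; exact mul_le_mul ha hb (abs_nonneg _) ((abs_nonneg _).trans ha)
  set g1 : 𝒳 → ℝ := fun x => h x * deriv ℓ (μ₁ x) * (e x)⁻¹ with hg1
  set g0 : 𝒳 → ℝ := fun x => h x * deriv ℓ (μ₀ x) * (1 - e x)⁻¹ with hg0
  have mg1 : Measurable g1 := (hh.mul (hmd.comp hμ₁)).mul he.inv
  have mg0 : Measurable g0 := (hh.mul (hmd.comp hμ₀)).mul (measurable_const.sub he).inv
  have bg1 : ∀ x, |g1 x| ≤ Ch * Cℓ * η⁻¹ := fun x => bm (bm (hhb x) (hℓb x).2.2.2) (hinv1 x)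
  have bg0 : ∀ x, |g0 x| ≤ Ch * Cℓ * η⁻¹ := fun x => bm (bm (hhb x) (hℓb x).2.2.1) (hinv0 x)
  obtain ⟨i1, e1⟩ := aux_pull P X hX _ hWYi (fun x => e x * μ₁ x) hc1 g1 mg1 _ bg1
  obtain ⟨i2, e2⟩ := aux_pull P X hX _ hWi e hce (fun x => g1 x * μ₁ x) (mg1.mul hμ₁) _
    (fun x => bm (bg1 x) (hμ₁b x))
  obtain ⟨i3, e3⟩ := aux_pull P X hX _ hVYi (fun x => (1 - e x) * μ₀ x) hc0 g0 mg0 _ bg0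
  obtain ⟨i4, e4⟩ := aux_pull P X hX _ hWi e hce (fun x => g0 x * μ₀ x) (mg0.mul hμ₀) _
    (fun x => bm (bg0 x) (hμ₀b x))
  have i5 : Integrable (fun ω => g0 (X ω) * μ₀ (X ω)) P :=
    Integrable.of_bound ((mg0.mul hμ₀).comp hX).aestronglyMeasurable _
      (Filter.Eventually.of_forall fun ω => bm (bg0 (X ω)) (hμ₀b (X ω)))
  have i6 : Integrable (fun ω => g0 (X ω) * μ₀ (X ω) * e (X ω)) P := by
    refine Integrable.of_bound (((mg0.mul hμ₀).mul he).comp hX).aestronglyMeasurable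
      (Ch * Cℓ * η⁻¹ * C₀ * 1) (Filter.Eventually.of_forall fun ω => ?_)
    refine bm (bm (bg0 (X ω)) (hμ₀b (X ω))) ?_
    have := heb (X ω)
    rw [abs_le]; constructor <;> linarith
  have i7 : Integrable (fun ω => h (X ω) * (ℓ (μ₁ (X ω)) - ℓ (μ₀ (X ω)))) P := by
    refine Integrable.of_bound
      ((hh.mul ((hmℓ.comp hμ₁).sub (hmℓ.comp hμ₀))).comp hX).aestronglyMeasurable
      (Ch * (Cℓ + Cℓ)) (Filter.Eventually.of_forall fun ω => ?_)
    refine bm (hhb _) ((abs_sub _ _).trans (add_le_add (hℓb _).2.1 (hℓb _).1))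
  have j1 : Integrable (fun ω => g1 (X ω) * (W ω * Y ω) - g1 (X ω) * μ₁ (X ω) * W ω) P :=
    i1.sub i2
  have j0 : Integrable (fun ω => g0 (X ω) * μ₀ (X ω) - g0 (X ω) * μ₀ (X ω) * W ω) P :=
    i5.sub i4
  have j2 : Integrable (fun ω => g0 (X ω) * ((1 - W ω) * Y ω)
      - (g0 (X ω) * μ₀ (X ω) - g0 (X ω) * μ₀ (X ω) * W ω)) P := i3.sub j0
  have j3 : Integrable (fun ω => (g1 (X ω) * (W ω * Y ω) - g1 (X ω) * μ₁ (X ω) * W ω)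
      - (g0 (X ω) * ((1 - W ω) * Y ω)
      - (g0 (X ω) * μ₀ (X ω) - g0 (X ω) * μ₀ (X ω) * W ω))) P := j1.sub j2
  have key1 : ∫ ω, (g1 (X ω) * (W ω * Y ω) - g1 (X ω) * μ₁ (X ω) * W ω) ∂P = 0 := by
    rw [integral_sub i1 i2, e1, e2, sub_eq_zero]
    exact integral_congr_ae (Filter.Eventually.of_forall fun ω => by ring)
  have key0 : ∫ ω, (g0 (X ω) * ((1 - W ω) * Y ω)
      - (g0 (X ω) * μ₀ (X ω) - g0 (X ω) * μ₀ (X ω) * W ω)) ∂P = 0 := by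
    rw [integral_sub i3 j0, integral_sub i5 i4, e3, e4, ← integral_sub i5 i6,
      sub_eq_zero]
    exact integral_congr_ae (Filter.Eventually.of_forall fun ω => by ring)
  have hfin : ∫ ω, ((g1 (X ω) * (W ω * Y ω) - g1 (X ω) * μ₁ (X ω) * W ω)
      - (g0 (X ω) * ((1 - W ω) * Y ω)
      - (g0 (X ω) * μ₀ (X ω) - g0 (X ω) * μ₀ (X ω) * W ω))
      + h (X ω) * (ℓ (μ₁ (X ω)) - ℓ (μ₀ (X ω)))) ∂P
      = ∫ ω, h (X ω) * (ℓ (μ₁ (X ω)) - ℓ (μ₀ (X ω))) ∂P := by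
    rw [integral_add j3 i7,
      integral_sub j1 j2, key1, key0]
    ring
  rw [← hfin]
  refine integral_congr_ae (Filter.Eventually.of_forall fun ω => ?_)
  simp only [hg1, hg0, div_eq_mul_inv]
  ring
end

section
/- Conditional variance of the AIPW pseudo-outcome: under the additive noise model, E[(Γ − τ(X))² ∣ σ(X)] = σ²/( e(X)·(1 − e(X)) ) almost surely; combined with E[Γ ∣ σ(X)] = τ(X), the conditional variance of Γ given X equals σ²/(e(X)(1−e(X))). -/
open MeasureTheory ProbabilityTheory

lemma aipw_aux_s13
    {Ω 𝒳 : Type*} [MeasurableSpace Ω] [m𝒳 : MeasurableSpace 𝒳]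
    (P : Measure Ω) [IsProbabilityMeasure P]
    (X : Ω → 𝒳) (W : Ω → ℝ)
    (hX : Measurable X) (hW : Measurable W)
    (hW01 : ∀ᵐ ω ∂P, W ω = 0 ∨ W ω = 1)
    (e : 𝒳 → ℝ)
    (hce : P[W | m𝒳.comap X] =ᵐ[P] fun ω => e (X ω))
    (ε : Ω → ℝ) (hε : Measurable ε)
    (hindep : IndepFun (fun ω => (X ω, W ω)) ε P)
    (f : ℝ → ℝ) (hf : Measurable f) (hfi : Integrable (fun ω => f (ε ω)) P)
    (a b : 𝒳 → ℝ) (ha : Measurable a) (hb : Measurable b)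
    (A B : ℝ) (hA : ∀ x, |a x| ≤ A) (hB : ∀ x, |b x| ≤ B) :
    Integrable (fun ω => (W ω * a (X ω) + b (X ω)) * f (ε ω)) P ∧
    P[fun ω => (W ω * a (X ω) + b (X ω)) * f (ε ω) | m𝒳.comap X] =ᵐ[P]
      fun ω => (e (X ω) * a (X ω) + b (X ω)) * ∫ ω, f (ε ω) ∂P := by
  have hle : m𝒳.comap X ≤ ‹MeasurableSpace Ω› := hX.comap_le
  have hXW : Measurable (fun ω => (X ω, W ω)) := hX.prodMk hW
  have hle' := hXW.comap_le
  set m' := MeasurableSpace.comap (fun ω => (X ω, W ω)) inferInstance with hm'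
  have hmXW : Measurable[m'] (fun ω => (X ω, W ω)) := comap_measurable _
  have hXm' : Measurable[m'] X := measurable_fst.comp hmXW
  have hWm' : Measurable[m'] W := measurable_snd.comp hmXW
  have hmm : m𝒳.comap X ≤ m' := hXm'.comap_le
  have hXm : Measurable[m𝒳.comap X] X := comap_measurable _
  have haX : StronglyMeasurable[m𝒳.comap X] (fun ω => a (X ω)) :=
    (ha.comp hXm).stronglyMeasurable
  have hbX : StronglyMeasurable[m𝒳.comap X] (fun ω => b (X ω)) :=
    (hb.comp hXm).stronglyMeasurable
  have hH : StronglyMeasurable[m'] (fun ω => W ω * a (X ω) + b (X ω)) :=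
    (hWm'.stronglyMeasurable.mul (haX.mono hmm)).add (hbX.mono hmm)
  have hHb : ∀ᵐ ω ∂P, ‖W ω * a (X ω) + b (X ω)‖ ≤ A + B := by
    filter_upwards [hW01] with ω h
    have h1 := hA (X ω)
    have h2 := hB (X ω)
    have h0 := abs_nonneg (a (X ω))
    rw [Real.norm_eq_abs]
    refine (abs_add_le _ _).trans (add_le_add ?_ h2)
    rcases h with h | h <;> simp [h] <;> linarith
  have hint : Integrable (fun ω => (W ω * a (X ω) + b (X ω)) * f (ε ω)) P :=
    hfi.bdd_mul (hH.mono hle').aestronglyMeasurable hHb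
  have hWi : Integrable W P := by
    refine Integrable.of_bound hW.aestronglyMeasurable 1 ?_
    filter_upwards [hW01] with ω h
    rcases h with h | h <;> simp [h]
  have hWa : Integrable (fun ω => W ω * a (X ω)) P :=
    hWi.mul_bdd (c := A) (haX.mono hle).aestronglyMeasurable (.of_forall fun ω => hA _)
  have hbi : Integrable (fun ω => b (X ω)) P :=
    Integrable.of_bound (hbX.mono hle).aestronglyMeasurable B (.of_forall fun ω => hB _)
  refine ⟨hint, ?_⟩
  have hfc : P[fun ω => f (ε ω) | m'] =ᵐ[P] fun _ => ∫ ω, f (ε ω) ∂P := by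
    refine condExp_indep_eq hε.comap_le hle' ?_ ((IndepFun_iff_Indep _ _ _).1 hindep).symm
    exact (hf.comp (comap_measurable ε)).stronglyMeasurable
  have h1 : P[fun ω => (W ω * a (X ω) + b (X ω)) * f (ε ω) | m'] =ᵐ[P]
      fun ω => (W ω * a (X ω) + b (X ω)) * ∫ ω, f (ε ω) ∂P := by
    refine (condExp_mul_of_stronglyMeasurable_left hH hint hfi).trans ?_
    filter_upwards [hfc] with ω h
    simp [h]
  set c := ∫ ω, f (ε ω) ∂P
  have h2 : P[fun ω => W ω * a (X ω) | m𝒳.comap X] =ᵐ[P] fun ω => e (X ω) * a (X ω) := by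
    refine (condExp_mul_of_stronglyMeasurable_right haX hWa hWi).trans ?_
    filter_upwards [hce] with ω h
    simp [h]
  have h3 : P[fun ω => W ω * a (X ω) + b (X ω) | m𝒳.comap X] =ᵐ[P]
      fun ω => e (X ω) * a (X ω) + b (X ω) := by
    refine (condExp_add hWa hbi _).trans ?_
    rw [condExp_of_stronglyMeasurable hle hbX hbi]
    filter_upwards [h2] with ω h
    simp [h]
  refine (condExp_condExp_of_le hmm hle').symm.trans ((condExp_congr_ae h1).trans ?_)
  refine (condExp_mul_of_stronglyMeasurable_right stronglyMeasurable_const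
    ((hWa.add hbi).mul_const c) (hWa.add hbi)).trans ?_
  filter_upwards [h3] with ω h
  exact congrArg (· * c) h

/-- Conditional variance of the AIPW pseudo-outcome: under the additive noise model,
`E[(Γ − τ(X))² ∣ σ(X)] = σ²/(e(X)(1 − e(X)))` almost surely, and `E[Γ ∣ σ(X)] = τ(X)`
almost surely, so the conditional variance of `Γ` given `X` equals `σ²/(e(X)(1−e(X)))`. -/
theorem aipw_conditional_variance
    {Ω 𝒳 : Type*} [MeasurableSpace Ω] [m𝒳 : MeasurableSpace 𝒳]
    (P : Measure Ω) [IsProbabilityMeasure P]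
    (X : Ω → 𝒳) (W Y : Ω → ℝ)
    (hX : Measurable X) (hW : Measurable W) (hY : Measurable Y)
    (hW01 : ∀ᵐ ω ∂P, W ω = 0 ∨ W ω = 1)
    (e μ₀ μ₁ : 𝒳 → ℝ)
    (he : Measurable e) (hμ₀ : Measurable μ₀) (hμ₁ : Measurable μ₁)
    (C₀ C₁ : ℝ) (hμ₀b : ∀ x, |μ₀ x| ≤ C₀) (hμ₁b : ∀ x, |μ₁ x| ≤ C₁)
    (η : ℝ) (hη₀ : 0 < η) (hη₁ : η < 1/2)
    (heb : ∀ x, η ≤ e x ∧ e x ≤ 1 - η)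
    (hce : P[W | m𝒳.comap X] =ᵐ[P] fun ω => e (X ω))
    (ε : Ω → ℝ) (hε : Measurable ε)
    (hindep : IndepFun (fun ω => (X ω, W ω)) ε P)
    (hε2 : MemLp ε 2 P) (hεmean : ∫ ω, ε ω ∂P = 0)
    (σ2 : ℝ) (hεvar : variance ε P = σ2)
    (hmodel : ∀ᵐ ω ∂P, Y ω = W ω * μ₁ (X ω) + (1 - W ω) * μ₀ (X ω) + ε ω) :
    (P[fun ω => ((W ω * (Y ω - μ₁ (X ω)) / e (X ω) + μ₁ (X ω)
          - (1 - W ω) * (Y ω - μ₀ (X ω)) / (1 - e (X ω)) - μ₀ (X ω))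
          - (μ₁ (X ω) - μ₀ (X ω))) ^ 2 | m𝒳.comap X]
        =ᵐ[P] fun ω => σ2 / (e (X ω) * (1 - e (X ω))))
      ∧ (P[fun ω => W ω * (Y ω - μ₁ (X ω)) / e (X ω) + μ₁ (X ω)
          - (1 - W ω) * (Y ω - μ₀ (X ω)) / (1 - e (X ω)) - μ₀ (X ω) | m𝒳.comap X]
        =ᵐ[P] fun ω => μ₁ (X ω) - μ₀ (X ω)) := by
  have hle : m𝒳.comap X ≤ ‹MeasurableSpace Ω› := hX.comap_le
  have hXm : Measurable[m𝒳.comap X] X := comap_measurable _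
  have e0 : ∀ x, 0 < e x := fun x => hη₀.trans_le (heb x).1
  have e1 : ∀ x, 0 < 1 - e x := fun x => by linarith [(heb x).2]
  have b0 : ∀ x, |(e x)⁻¹| ≤ η⁻¹ := fun x => by
    rw [abs_of_pos (inv_pos.2 (e0 x))]
    exact inv_anti₀ hη₀ (heb x).1
  have b1 : ∀ x, |(1 - e x)⁻¹| ≤ η⁻¹ := fun x => by
    rw [abs_of_pos (inv_pos.2 (e1 x))]
    exact inv_anti₀ hη₀ (by linarith [(heb x).2])
  have b0' : ∀ x, |(e x)⁻¹ ^ 2| ≤ η⁻¹ ^ 2 := fun x => by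
    rw [abs_pow]; exact pow_le_pow_left₀ (abs_nonneg _) (b0 x) 2
  have b1' : ∀ x, |(1 - e x)⁻¹ ^ 2| ≤ η⁻¹ ^ 2 := fun x => by
    rw [abs_pow]; exact pow_le_pow_left₀ (abs_nonneg _) (b1 x) 2
  have hvar : ∫ ω, ε ω ^ 2 ∂P = σ2 := by
    rw [← hεvar, variance_of_integral_eq_zero hε.aemeasurable hεmean]
  have hm0 : Measurable fun x => (e x)⁻¹ := he.inv
  have hm1 : Measurable fun x => (1 - e x)⁻¹ := (he.const_sub 1).inv
  constructor
  · have h := (aipw_aux_s13 P X W hX hW hW01 e hce ε hε hindep (fun t => t ^ 2) (by fun_prop)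
      hε2.integrable_sq (fun x => (e x)⁻¹ ^ 2 - (1 - e x)⁻¹ ^ 2) (fun x => (1 - e x)⁻¹ ^ 2)
      ((hm0.pow_const 2).sub (hm1.pow_const 2)) (hm1.pow_const 2) (η⁻¹ ^ 2 + η⁻¹ ^ 2) (η⁻¹ ^ 2)
      (fun x => (abs_sub _ _).trans (add_le_add (b0' x) (b1' x))) b1').2
    refine (condExp_congr_ae ?_).trans (h.trans ?_)
    · filter_upwards [hW01, hmodel] with ω hw hy
      rw [hy]
      have := (e0 (X ω)).ne'
      have := (e1 (X ω)).ne'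
      rcases hw with hw | hw <;> rw [hw] <;> field_simp <;> ring
    · refine .of_forall fun ω => ?_
      have := (e0 (X ω)).ne'
      have := (e1 (X ω)).ne'
      simp only [hvar]
      field_simp
      ring
  · obtain ⟨hi, h⟩ := aipw_aux_s13 P X W hX hW hW01 e hce ε hε hindep (fun t => t) (by fun_prop)
      (hε2.integrable one_le_two) (fun x => (e x)⁻¹ + (1 - e x)⁻¹) (fun x => -(1 - e x)⁻¹)
      (hm0.add hm1) hm1.neg (η⁻¹ + η⁻¹) η⁻¹
      (fun x => (abs_add_le _ _).trans (add_le_add (b0 x) (b1 x)))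
      (fun x => by rw [abs_neg]; exact b1 x)
    have hτ : StronglyMeasurable[m𝒳.comap X] (fun ω => μ₁ (X ω) - μ₀ (X ω)) :=
      ((hμ₁.sub hμ₀).comp hXm).stronglyMeasurable
    have hτi : Integrable (fun ω => μ₁ (X ω) - μ₀ (X ω)) P :=
      Integrable.of_bound (hτ.mono hle).aestronglyMeasurable (C₁ + C₀)
        (.of_forall fun ω => (abs_sub _ _).trans (add_le_add (hμ₁b _) (hμ₀b _)))
    have h2 := condExp_add hi hτi (m𝒳.comap X)
    rw [condExp_of_stronglyMeasurable hle hτ hτi] at h2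
    refine (condExp_congr_ae ?_).trans (h2.trans ?_)
    · filter_upwards [hW01, hmodel] with ω hw hy
      simp only [Pi.add_apply]
      rw [hy]
      have := (e0 (X ω)).ne'
      have := (e1 (X ω)).ne'
      rcases hw with hw | hw <;> rw [hw] <;> field_simp <;> ring
    · filter_upwards [h] with ω h
      simp only [Pi.add_apply, h, hεmean]
      ring
end
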